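/- Let A be a real m×n matrix (m ≥ 1) all of whose rows are nonzero, let x* ∈ ℝ^n with A x* = b, and let σ > 0 satisfy ‖A u‖₂ ≥ σ‖u‖₂ for all u in the range of Aᵀ. Let x ∈ ℝ^n satisfy x − x* ∈ range(Aᵀ) and b − Ax ≠ 0, and let S ⊆ {1,…,m} be an index set with b^{(i)} − A^{(i)}x = 0 for all i ∈ S. Fix p ∈ [1,∞) and η ∈ (0,1], set ε = η · max_{1≤i≤m} |b^{(i)} − A^{(i)}x|^p / ‖A^{(i)}‖_p^p, τ = { i : |b^{(i)} − A^{(i)}x|^p ≥ ε‖A^{(i)}‖_p^p }, ξ = Σ_{i∈τ} (b^{(i)} − A^{(i)}x) e_i, and x' = x + (ξᵀ(b − Ax)/‖Aᵀξ‖₂²) Aᵀξ. Then ‖x' − x*‖₂² ≤ (1 − β σ²) ‖x − x*‖₂², where β = (η^{2/p} / Σ_{i∈{1,…,m}∖S} ‖A^{(i)}‖_p²) · (Σ_{i∈τ} ‖A^{(i)}‖_p²) / ‖A_τ‖², and ‖A_τ‖ is the ℓ²→ℓ² operator norm (largest singular value) of the row submatrix A_τ with rows indexed by τ. -/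

import Mathlib

open Matrix Finset

/-- The ℓ²→ℓ² operator norm (largest singular value) of a real matrix. -/
noncomputable def sigmaMax {ι : Type} [Fintype ι] {n : ℕ}
    (M : Matrix ι (Fin n) ℝ) : ℝ :=
  ‖LinearMap.toContinuousLinearMap (Matrix.toEuclideanLin M)‖

/-- The row submatrix of `A` consisting of the rows indexed by `τ`. -/
def rowSubmatrix {m n : ℕ} (A : Matrix (Fin m) (Fin n) ℝ) (τ : Finset (Fin m)) :
    Matrix {i : Fin m // i ∈ τ} (Fin n) ℝ := fun i j => A i.1 j

/-!
Moving from `x` along `g = Aᵀξ` to the point closest to `x*` removes `⟨g, x* - x⟩² / ‖g‖²` from the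
squared error. Since `A (x* - x)` is the residual `r`, the inner product is `⟨ξ, r⟩ = ‖r_τ‖²`, while
`‖g‖² ≤ ‖A_τ‖² ‖r_τ‖²`; so the squared error drops by at least `‖r_τ‖² / ‖A_τ‖²`. The greedy rule
makes `‖r_τ‖²` a definite fraction of `‖r‖²`: if `M` bounds every `|rᵢ|ᵖ / wᵢ`, each residual entry
is at most `(M wᵢ)^(1/p)`, and each selected one is at least `(η M wᵢ)^(1/p)`.
-/

open scoped Matrix.Norms.L2Operator RealInnerProductSpace

lemma norm_sub_inner_div_smul_sq {E : Type*} [NormedAddCommGroup E] [InnerProductSpace ℝ E]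
    (e g : E) : ‖e - (⟪g, e⟫ / ‖g‖ ^ 2) • g‖ ^ 2 = ‖e‖ ^ 2 - ⟪g, e⟫ ^ 2 / ‖g‖ ^ 2 := by
  rcases eq_or_ne g 0 with rfl | hg
  · simp
  · have hg' : ‖g‖ ≠ 0 := norm_ne_zero_iff.2 hg
    rw [norm_sub_sq_real, norm_smul, mul_pow, Real.norm_eq_abs, sq_abs, real_inner_smul_right,
      real_inner_comm]
    field_simp
    ring

lemma sq_mul_le_of_mul_sqrt_le {σ a b : ℝ} (hσ : 0 ≤ σ) (hb : 0 ≤ b) (h : σ * √a ≤ √b) :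
    σ ^ 2 * a ≤ b := by
  rwa [← Real.sqrt_le_sqrt_iff hb, Real.sqrt_mul (sq_nonneg σ), Real.sqrt_sq hσ]

lemma abs_rpow_rpow_two_div (a : ℝ) {p : ℝ} (hp : 0 < p) : (|a| ^ p) ^ (2 / p) = a ^ 2 := by
  rw [← Real.rpow_mul (abs_nonneg a), mul_div_cancel₀ _ hp.ne', Real.rpow_two, sq_abs]

lemma sum_abs_rpow_pos {κ : Type*} [Fintype κ] {a : κ → ℝ} (ha : a ≠ 0) (p : ℝ) :
    0 < ∑ j, |a j| ^ p := by
  obtain ⟨j, hj⟩ := Function.ne_iff.1 ha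
  exact sum_pos' (fun _ _ => by positivity)
    ⟨j, mem_univ j, Real.rpow_pos_of_pos (abs_pos.2 hj) p⟩

section Greedy

variable {ι : Type*} {r w : ι → ℝ} {p : ℝ}

lemma sum_sq_le_rpow_mul_sum_rpow (hp : 0 < p) {M : ℝ} (hM : 0 ≤ M) {s : Finset ι}
    (hw : ∀ i ∈ s, 0 ≤ w i) (h : ∀ i ∈ s, |r i| ^ p ≤ M * w i) :
    ∑ i ∈ s, r i ^ 2 ≤ M ^ (2 / p) * ∑ i ∈ s, w i ^ (2 / p) := by
  rw [mul_sum]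
  refine sum_le_sum fun i hi => ?_
  rw [← Real.mul_rpow hM (hw i hi), ← abs_rpow_rpow_two_div (r i) hp]
  exact Real.rpow_le_rpow (by positivity) (h i hi) (by positivity)

lemma rpow_mul_sum_rpow_le_sum_sq (hp : 0 < p) {c : ℝ} (hc : 0 ≤ c) {s : Finset ι}
    (hw : ∀ i ∈ s, 0 ≤ w i) (h : ∀ i ∈ s, c * w i ≤ |r i| ^ p) :
    c ^ (2 / p) * ∑ i ∈ s, w i ^ (2 / p) ≤ ∑ i ∈ s, r i ^ 2 := by
  rw [mul_sum]
  refine sum_le_sum fun i hi => ?_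
  rw [← Real.mul_rpow hc (hw i hi), ← abs_rpow_rpow_two_div (r i) hp]
  exact Real.rpow_le_rpow (mul_nonneg hc (hw i hi)) (h i hi) (by positivity)

lemma sum_sq_pos_of_mul_le_abs_rpow (hp : 0 < p) {c : ℝ} (hc : 0 < c) {s : Finset ι}
    (hs : s.Nonempty) (hw : ∀ i ∈ s, 0 < w i) (h : ∀ i ∈ s, c * w i ≤ |r i| ^ p) :
    0 < ∑ i ∈ s, r i ^ 2 :=
  (mul_pos (Real.rpow_pos_of_pos hc _)
    (sum_pos (fun i hi => Real.rpow_pos_of_pos (hw i hi) _) hs)).trans_le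
    (rpow_mul_sum_rpow_le_sum_sq hp hc.le (fun i hi => (hw i hi).le) h)

variable [Fintype ι]

lemma exists_mul_sup'_div_mul_le (hι : (univ : Finset ι).Nonempty) {ρ : ι → ℝ}
    (hρ : ∀ i, 0 ≤ ρ i) (hw : ∀ i, 0 < w i) {η : ℝ} (hη : η ≤ 1) :
    ∃ i, η * univ.sup' hι (fun k => ρ k / w k) * w i ≤ ρ i := by
  obtain ⟨i, -, hi⟩ := exists_mem_eq_sup' hι fun k => ρ k / w k
  refine ⟨i, ?_⟩
  rw [hi, ← le_div_iff₀ (hw i)]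
  exact mul_le_of_le_one_left (div_nonneg (hρ i) (hw i).le) hη

lemma div_mul_sum_sq_le_of_greedy [DecidableEq ι] (hp : 0 < p) (hw : ∀ i, 0 ≤ w i)
    {M : ℝ} (hM : 0 ≤ M) (hrM : ∀ i, |r i| ^ p ≤ M * w i) {η : ℝ} (hη : 0 ≤ η)
    {τ : Finset ι} (hτ : ∀ i ∈ τ, η * M * w i ≤ |r i| ^ p)
    {S : Finset ι} (hS : ∀ i ∈ S, r i = 0) :
    η ^ (2 / p) / (∑ i ∈ Sᶜ, w i ^ (2 / p)) * (∑ i ∈ τ, w i ^ (2 / p)) * ∑ i, r i ^ 2 ≤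
      ∑ i ∈ τ, r i ^ 2 := by
  have hall : ∑ i, r i ^ 2 ≤ M ^ (2 / p) * ∑ i ∈ Sᶜ, w i ^ (2 / p) := by
    rw [← sum_subset (subset_univ Sᶜ) fun i _ hi => by simp [hS i (by simpa using hi)]]
    exact sum_sq_le_rpow_mul_sum_rpow hp hM (fun i _ => hw i) fun i _ => hrM i
  have hblock : (η * M) ^ (2 / p) * ∑ i ∈ τ, w i ^ (2 / p) ≤ ∑ i ∈ τ, r i ^ 2 :=
    rpow_mul_sum_rpow_le_sum_sq hp (mul_nonneg hη hM) (fun i _ => hw i) hτ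
  have hW (s : Finset ι) : 0 ≤ ∑ i ∈ s, w i ^ (2 / p) :=
    sum_nonneg fun i _ => Real.rpow_nonneg (hw i) _
  have hV := hW τ
  calc η ^ (2 / p) / (∑ i ∈ Sᶜ, w i ^ (2 / p)) * (∑ i ∈ τ, w i ^ (2 / p)) * ∑ i, r i ^ 2
      = η ^ (2 / p) * ((∑ i, r i ^ 2) / ∑ i ∈ Sᶜ, w i ^ (2 / p)) *
          ∑ i ∈ τ, w i ^ (2 / p) := by ring
    _ ≤ η ^ (2 / p) * M ^ (2 / p) * ∑ i ∈ τ, w i ^ (2 / p) := by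
        gcongr
        exact div_le_of_le_mul₀ (hW Sᶜ) (by positivity) hall
    _ ≤ ∑ i ∈ τ, r i ^ 2 := by rwa [← Real.mul_rpow hη hM]

end Greedy

section BlockKaczmarz

variable {ι κ : Type*} [Fintype ι]

lemma sum_sq_transpose_mulVec_le [Fintype κ] [DecidableEq κ] (A : Matrix ι κ ℝ) (v : ι → ℝ) :
    ∑ j, ((Aᵀ *ᵥ v) j) ^ 2 ≤ ‖A‖ ^ 2 * ∑ i, v i ^ 2 := by
  classical
  have h := pow_le_pow_left₀ (norm_nonneg _) (l2_opNorm_mulVec Aᵀ (WithLp.toLp 2 v)) 2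
  rw [mul_pow, ← conjTranspose_eq_transpose_of_trivial, l2_opNorm_conjTranspose] at h
  simpa [EuclideanSpace.real_norm_sq_eq] using h

variable [DecidableEq ι]

/-- The vector `ξ = ∑ i ∈ τ, r i • eᵢ`: the part of the residual `r` supported on the block `τ`,
extended by zero so that it can be fed to the full matrix `Aᵀ`. -/
def blockResidual (τ : Finset ι) (r : ι → ℝ) : ι → ℝ :=
  ∑ i ∈ τ, r i • Pi.single i 1

lemma blockResidual_dotProduct_self (τ : Finset ι) (r : ι → ℝ) :
    blockResidual τ r ⬝ᵥ r = ∑ i ∈ τ, r i ^ 2 := by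
  simp [blockResidual, sum_dotProduct, sq]

lemma transpose_mulVec_blockResidual (A : Matrix ι κ ℝ) (τ : Finset ι) (r : ι → ℝ) :
    Aᵀ *ᵥ blockResidual τ r = (A.submatrix ((↑) : τ → ι) id)ᵀ *ᵥ fun i : τ => r i := by
  ext j
  calc (Aᵀ *ᵥ blockResidual τ r) j = ∑ i ∈ τ, A i j * r i := by
        simp [blockResidual, mulVec_sum, mulVec_smul, mul_comm]
    _ = ∑ i : τ, A i j * r i := (sum_coe_sort τ fun i => A i j * r i).symm

variable [Fintype κ]

lemma sum_sq_transpose_mulVec_blockResidual_le [DecidableEq κ] (A : Matrix ι κ ℝ)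
    (τ : Finset ι) (r : ι → ℝ) :
    ∑ j, ((Aᵀ *ᵥ blockResidual τ r) j) ^ 2 ≤
      ‖A.submatrix ((↑) : τ → ι) id‖ ^ 2 * ∑ i ∈ τ, r i ^ 2 := by
  rw [transpose_mulVec_blockResidual, ← sum_coe_sort τ fun i => r i ^ 2]
  exact sum_sq_transpose_mulVec_le _ _

/-- One block Kaczmarz update of `x`, with residual `r` and block `τ`: the step along `Aᵀξ`, for
`ξ = blockResidual τ r`, whose length `⟨ξ, r⟩ / ‖Aᵀξ‖²` minimizes the distance to every solution of
the system (no step is taken if `Aᵀξ = 0`). Passing `r` makes the right-hand side unnecessary. -/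
noncomputable def blockKaczmarzStep (A : Matrix ι κ ℝ) (r : ι → ℝ) (τ : Finset ι)
    (x : κ → ℝ) : κ → ℝ :=
  x + ((blockResidual τ r ⬝ᵥ r) / ∑ j, ((Aᵀ *ᵥ blockResidual τ r) j) ^ 2) •
    (Aᵀ *ᵥ blockResidual τ r)

variable {A : Matrix ι κ ℝ} {x xs : κ → ℝ} {r : ι → ℝ}

lemma transpose_mulVec_blockResidual_dotProduct (hr : A *ᵥ (xs - x) = r) (τ : Finset ι) :
    (Aᵀ *ᵥ blockResidual τ r) ⬝ᵥ (xs - x) = ∑ i ∈ τ, r i ^ 2 := by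
  rw [mulVec_transpose, ← dotProduct_mulVec, hr, blockResidual_dotProduct_self]

lemma sum_sq_blockKaczmarzStep_sub (hr : A *ᵥ (xs - x) = r) (τ : Finset ι) :
    ∑ j, (blockKaczmarzStep A r τ x j - xs j) ^ 2 = ∑ j, (x j - xs j) ^ 2 -
      (∑ i ∈ τ, r i ^ 2) ^ 2 / ∑ j, ((Aᵀ *ᵥ blockResidual τ r) j) ^ 2 := by
  set g := Aᵀ *ᵥ blockResidual τ r with hg
  have hinner : ⟪WithLp.toLp 2 g, WithLp.toLp 2 (x - xs)⟫ = -∑ i ∈ τ, r i ^ 2 := by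
    rw [EuclideanSpace.inner_toLp_toLp, star_trivial, dotProduct_comm, ← neg_sub xs x,
      dotProduct_neg, transpose_mulVec_blockResidual_dotProduct hr]
  have h := norm_sub_inner_div_smul_sq (WithLp.toLp 2 (x - xs)) (WithLp.toLp 2 g)
  rw [hinner] at h
  simp only [EuclideanSpace.real_norm_sq_eq, PiLp.sub_apply, PiLp.smul_apply, Pi.sub_apply,
    smul_eq_mul, neg_sq] at h
  rw [← h]
  refine sum_congr rfl fun j _ => ?_
  simp only [blockKaczmarzStep, ← hg, blockResidual_dotProduct_self, Pi.add_apply, Pi.smul_apply,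
    smul_eq_mul]
  ring

/- Multiplied out, the bound on the decrease also covers blocks with `‖A_τ‖ = 0`. -/
lemma sum_sq_residual_le_mul_decrease [DecidableEq κ] (hr : A *ᵥ (xs - x) = r) (τ : Finset ι) :
    ∑ i ∈ τ, r i ^ 2 ≤ ‖A.submatrix ((↑) : τ → ι) id‖ ^ 2 *
      (∑ j, (x j - xs j) ^ 2 - ∑ j, (blockKaczmarzStep A r τ x j - xs j) ^ 2) := by
  rw [sum_sq_blockKaczmarzStep_sub hr, sub_sub_cancel]
  have hgram := transpose_mulVec_blockResidual_dotProduct hr τ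
  have hG := sum_sq_transpose_mulVec_blockResidual_le A τ r
  set g := Aᵀ *ᵥ blockResidual τ r
  set R := ∑ i ∈ τ, r i ^ 2
  have hR : 0 ≤ R := sum_nonneg fun i _ => sq_nonneg _
  rcases hR.eq_or_lt with hR0 | hRpos
  · simp [← hR0]
  have hg : g ≠ 0 := by
    intro hg
    rw [hg, zero_dotProduct] at hgram
    exact hRpos.ne hgram
  have hGpos : 0 < ∑ j, g j ^ 2 := by simpa using sum_abs_rpow_pos hg 2
  rw [← mul_div_assoc, le_div_iff₀ hGpos]
  calc R * ∑ j, g j ^ 2 ≤ R * (‖A.submatrix ((↑) : τ → ι) id‖ ^ 2 * R) := by gcongr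
    _ = ‖A.submatrix ((↑) : τ → ι) id‖ ^ 2 * R ^ 2 := by ring

theorem fgbk_contraction_theorem21_general [DecidableEq κ]
    (hr : A *ᵥ (xs - x) = r) (hr0 : r ≠ 0) {σ : ℝ} (hσ0 : 0 ≤ σ)
    (hσ : σ * √(∑ j, (x j - xs j) ^ 2) ≤ √(∑ i, ((A *ᵥ (x - xs)) i) ^ 2))
    {w : ι → ℝ} (hw : ∀ i, 0 < w i) {S : Finset ι} (hS : ∀ i ∈ S, r i = 0)
    {p : ℝ} (hp : 0 < p) {η : ℝ} (hη : 0 < η) {M : ℝ} (hM : ∀ i, |r i| ^ p / w i ≤ M)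
    {τ : Finset ι} (hτ0 : τ.Nonempty) (hτ : ∀ i ∈ τ, η * M * w i ≤ |r i| ^ p) :
    ∑ j, (blockKaczmarzStep A r τ x j - xs j) ^ 2 ≤
      (1 - η ^ (2 / p) / (∑ i ∈ Sᶜ, w i ^ (2 / p)) *
        ((∑ i ∈ τ, w i ^ (2 / p)) / ‖A.submatrix ((↑) : τ → ι) id‖ ^ 2) * σ ^ 2) *
      ∑ j, (x j - xs j) ^ 2 := by
  obtain ⟨k, hk⟩ := Function.ne_iff.1 hr0
  have hMpos : 0 < M :=
    (div_pos (Real.rpow_pos_of_pos (abs_pos.2 hk) p) (hw k)).trans_le (hM k)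
  have hR := sum_sq_pos_of_mul_le_abs_rpow hp (mul_pos hη hMpos) hτ0 (fun i _ => hw i) hτ
  have hσD : σ ^ 2 * ∑ j, (x j - xs j) ^ 2 ≤ ∑ i, r i ^ 2 := by
    rw [← neg_sub xs x, mulVec_neg, hr] at hσ
    simpa using sq_mul_le_of_mul_sqrt_le hσ0 (by positivity) hσ
  have hgreedy := div_mul_sum_sq_le_of_greedy hp (fun i => (hw i).le) hMpos.le
    (fun i => (div_le_iff₀ (hw i)).1 (hM i)) hη.le hτ hS
  have hdecrease := sum_sq_residual_le_mul_decrease hr τ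
  have hW (s : Finset ι) : 0 ≤ ∑ i ∈ s, w i ^ (2 / p) :=
    sum_nonneg fun i _ => Real.rpow_nonneg (hw i).le _
  set D := ∑ j, (x j - xs j) ^ 2
  set c := η ^ (2 / p) / (∑ i ∈ Sᶜ, w i ^ (2 / p)) * ∑ i ∈ τ, w i ^ (2 / p) with hc
  set L := ‖A.submatrix ((↑) : τ → ι) id‖
  have hc0 : 0 ≤ c := mul_nonneg (div_nonneg (Real.rpow_nonneg hη.le _) (hW Sᶜ)) (hW τ)
  have hL : 0 < L ^ 2 := (sq_nonneg L).lt_of_ne' (left_ne_zero_of_mul (hR.trans_le hdecrease).ne')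
  have hrate : c / L ^ 2 * σ ^ 2 * D ≤ D - ∑ j, (blockKaczmarzStep A r τ x j - xs j) ^ 2 :=
    calc c / L ^ 2 * σ ^ 2 * D = c * (σ ^ 2 * D) / L ^ 2 := by ring
      _ ≤ c * (∑ i, r i ^ 2) / L ^ 2 := by gcongr
      _ ≤ (∑ i ∈ τ, r i ^ 2) / L ^ 2 := by gcongr
      _ ≤ _ := (div_le_iff₀' hL).2 hdecrease
  rw [← mul_div_assoc, ← hc]
  linarith

end BlockKaczmarz

/-- Per-iteration contraction bound of Theorem 2.1 for the fast greedy block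
Kaczmarz method, where `S` plays the role of the previous control index set
`τ_{k−1}` on whose indices the current residual vanishes:
`‖x' − x*‖₂² ≤ (1 − β σ²)‖x − x*‖₂²` with
`β = (η^{2/p} / Σ_{i∉S} ‖A⁽ⁱ⁾‖_p²) · (Σ_{i∈τ} ‖A⁽ⁱ⁾‖_p²) / ‖A_τ‖²`. -/
theorem fgbk_contraction_theorem21 {m n : ℕ} (hm : 0 < m)
    (A : Matrix (Fin m) (Fin n) ℝ) (hA : ∀ i, A i ≠ 0)
    (b : Fin m → ℝ) (xs : Fin n → ℝ) (hxs : A.mulVec xs = b)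
    (σ : ℝ) (hσ0 : 0 < σ)
    (hσ : ∀ u : Fin n → ℝ, (∃ y : Fin m → ℝ, u = A.transpose.mulVec y) →
      σ * Real.sqrt (∑ j, (u j) ^ 2) ≤ Real.sqrt (∑ i, (A.mulVec u i) ^ 2))
    (x : Fin n → ℝ) (hx : ∃ y : Fin m → ℝ, x - xs = A.transpose.mulVec y)
    (hres : b - A.mulVec x ≠ 0)
    (S : Finset (Fin m)) (hS : ∀ i ∈ S, b i - A.mulVec x i = 0)
    (p : ℝ) (hp : 1 ≤ p) (η : ℝ) (hη0 : 0 < η) (hη1 : η ≤ 1)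
    (ε : ℝ)
    (hε : ε = η * Finset.univ.sup' ⟨⟨0, hm⟩, Finset.mem_univ _⟩
      (fun i => |b i - A.mulVec x i| ^ p / ∑ j, |A i j| ^ p))
    (τ : Finset (Fin m))
    (hτ : ∀ i, i ∈ τ ↔ |b i - A.mulVec x i| ^ p ≥ ε * ∑ j, |A i j| ^ p)
    (ξ : Fin m → ℝ)
    (hξ : ξ = ∑ i ∈ τ, (b i - A.mulVec x i) • (Pi.single i 1 : Fin m → ℝ))
    (x' : Fin n → ℝ)
    (hx' : x' = x + ((ξ ⬝ᵥ (b - A.mulVec x)) / ∑ j, (A.transpose.mulVec ξ j) ^ 2) •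
      A.transpose.mulVec ξ)
    (β : ℝ)
    (hβ : β = η ^ (2 / p) / (∑ i ∈ Sᶜ, (∑ j, |A i j| ^ p) ^ (2 / p)) *
      ((∑ i ∈ τ, (∑ j, |A i j| ^ p) ^ (2 / p)) / (sigmaMax (rowSubmatrix A τ)) ^ 2)) :
    ∑ j, (x' j - xs j) ^ 2 ≤ (1 - β * σ ^ 2) * ∑ j, (x j - xs j) ^ 2 := by
  have hw (i : Fin m) := sum_abs_rpow_pos (hA i) p
  subst hε hξ hx' hβ
  exact fgbk_contraction_theorem21_general (by rw [mulVec_sub, hxs]) hres hσ0.le (hσ _ hx) hw hS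
    (one_pos.trans_le hp) hη0
    (fun i => le_sup' (fun i => |b i - A.mulVec x i| ^ p / ∑ j, |A i j| ^ p) (mem_univ i))
    ((exists_mul_sup'_div_mul_le _ (fun i => by positivity) hw hη1).imp fun i => (hτ i).2)
    fun i => (hτ i).1
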